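/- arXiv:1708.04579 — 2 statements merged into one kernel-verified Lean document; each statement's English description precedes it below -/
import Mathlib

section
/- Let f : ℤⁿ → ℝ ∪ {+∞} be a globally or locally discrete midpoint convex function with argmin f ≠ ∅, let x⁽⁰⁾ ∈ dom f \ argmin f, let L = min{‖x − x⁽⁰⁾‖∞ : x ∈ argmin f}, and for an integer k let S_k = {x ∈ ℤⁿ : ‖x − x⁽⁰⁾‖∞ ≤ k}. Then for every integer k with 3 ≤ k ≤ L and every x' minimizing f over S_{k−1}, there exists x'' minimizing f over S_k with ‖x'' − x'‖∞ ≤ 2. -/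
/-- The ℓ∞-norm of an integer vector, as a natural number. -/
def linf {n : ℕ} (z : Fin n → ℤ) : ℕ :=
  Finset.univ.sup fun i => (z i).natAbs

/-- Componentwise round-up of (x+y)/2. -/
def avgUp {n : ℕ} (x y : Fin n → ℤ) : Fin n → ℤ :=
  fun i => ⌈((x i + y i : ℚ)) / 2⌉

/-- Componentwise round-down of (x+y)/2. -/
def avgDown {n : ℕ} (x y : Fin n → ℤ) : Fin n → ℤ :=
  fun i => ⌊((x i + y i : ℚ)) / 2⌋

/-- A set `S ⊆ ℤⁿ` is discrete midpoint convex. -/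
def DMCSet {n : ℕ} (S : Set (Fin n → ℤ)) : Prop :=
  ∀ ⦃x⦄, x ∈ S → ∀ ⦃y⦄, y ∈ S → 2 ≤ linf (x - y) →
    avgUp x y ∈ S ∧ avgDown x y ∈ S

/-- `f` satisfies discrete midpoint convexity for the pair `(x, y)`.
Values are in `ℝ ∪ {+∞}`, modeled as `WithTop ℝ`. -/
def DMCPair {n : ℕ} (f : (Fin n → ℤ) → WithTop ℝ) (x y : Fin n → ℤ) : Prop :=
  f (avgUp x y) + f (avgDown x y) ≤ f x + f y

/-- `f` is globally discrete midpoint convex. -/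
def GloballyDMC {n : ℕ} (f : (Fin n → ℤ) → WithTop ℝ) : Prop :=
  ∀ x y : Fin n → ℤ, 2 ≤ linf (x - y) → DMCPair f x y

/-- The effective domain of `f`. -/
def effDom {n : ℕ} (f : (Fin n → ℤ) → WithTop ℝ) : Set (Fin n → ℤ) :=
  {x | f x ≠ ⊤}

/-- `f` is locally discrete midpoint convex. -/
def LocallyDMC {n : ℕ} (f : (Fin n → ℤ) → WithTop ℝ) : Prop :=
  DMCSet (effDom f) ∧ ∀ x y : Fin n → ℤ, linf (x - y) = 2 → DMCPair f x y

section Averages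

variable {n : ℕ} (x y : Fin n → ℤ) (i : Fin n)

theorem avgUp_apply : avgUp x y i = (x i + y i + 1) / 2 := by
  unfold avgUp
  rw [Int.ceil_eq_iff]
  have h₁ : 2 * ((x i + y i + 1) / 2) ≤ x i + y i + 1 := by omega
  have h₂ : x i + y i ≤ 2 * ((x i + y i + 1) / 2) := by omega
  generalize (x i + y i + 1) / 2 = c at h₁ h₂
  have h₁' : 2 * (c : ℚ) ≤ x i + y i + 1 := by exact_mod_cast h₁
  have h₂' : (x i + y i : ℚ) ≤ 2 * c := by exact_mod_cast h₂
  constructor <;> linarith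

theorem avgDown_apply : avgDown x y i = (x i + y i) / 2 := by
  unfold avgDown
  rw [Int.floor_eq_iff]
  have h₁ : 2 * ((x i + y i) / 2) ≤ x i + y i := by omega
  have h₂ : x i + y i ≤ 2 * ((x i + y i) / 2) + 1 := by omega
  generalize (x i + y i) / 2 = c at h₁ h₂
  have h₁' : 2 * (c : ℚ) ≤ x i + y i := by exact_mod_cast h₁
  have h₂' : (x i + y i : ℚ) ≤ 2 * c + 1 := by exact_mod_cast h₂
  constructor <;> linarith

end Averages

/-- `‖y - x‖∞ = m`, in coordinates (for `0 < m`). -/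
def IsDist {n : ℕ} (m : ℤ) (x y : Fin n → ℤ) : Prop :=
  (∀ i, -m ≤ y i - x i ∧ y i - x i ≤ m) ∧ ∃ i, y i - x i = m ∨ y i - x i = -m

theorem linf_le_iff {n : ℕ} {z : Fin n → ℤ} {m : ℕ} :
    linf z ≤ m ↔ ∀ i, -(m : ℤ) ≤ z i ∧ z i ≤ m := by
  simp only [linf, Finset.sup_le_iff, Finset.mem_univ, true_imp_iff]
  exact forall_congr' fun i => by omega

theorem linf_sub_comm {n : ℕ} (x y : Fin n → ℤ) : linf (x - y) = linf (y - x) := by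
  simp only [linf, Pi.sub_apply]
  congr 1
  funext i
  omega

theorem IsDist.linf_eq {n : ℕ} {m : ℕ} {x y : Fin n → ℤ} (h : IsDist m x y) :
    linf (x - y) = m := by
  obtain ⟨hle, i, hi⟩ := h
  refine le_antisymm (linf_le_iff.2 fun i => ?_) ?_
  · have := hle i
    simp only [Pi.sub_apply]
    omega
  · have : ((x - y) i).natAbs ≤ linf (x - y) :=
      Finset.le_sup (f := fun i => ((x - y) i).natAbs) (Finset.mem_univ i)
    simp only [Pi.sub_apply] at this
    omega

theorem isDist_linf {n : ℕ} {x y : Fin n → ℤ} (h : 0 < linf (x - y)) :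
    IsDist (linf (x - y)) x y := by
  constructor
  · intro i
    have := (linf_le_iff (z := x - y)).1 le_rfl i
    simp only [Pi.sub_apply] at this
    omega
  · have hne : (Finset.univ : Finset (Fin n)).Nonempty := by
      by_contra hempty
      rw [Finset.not_nonempty_iff_eq_empty] at hempty
      simp [linf, hempty] at h
    obtain ⟨i, -, hi⟩ := Finset.exists_mem_eq_sup _ hne fun i => ((x - y) i).natAbs
    refine ⟨i, ?_⟩
    change linf (x - y) = _ at hi
    simp only [Pi.sub_apply] at hi
    omega

theorem IsDist.symm {n : ℕ} {m : ℤ} {x y : Fin n → ℤ} (h : IsDist m x y) : IsDist m y x := by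
  obtain ⟨hle, i, hi⟩ := h
  exact ⟨fun i => by have := hle i; omega, i, by omega⟩

/-- The `j`-th summand (`1 ≤ j ≤ m`) when an integer `z ∈ [-m, m]` is written as a
nondecreasing sum of `m` terms, all in `{0, 1}` or all in `{-1, 0}`. -/
def unitStep (m j z : ℤ) : ℤ :=
  if m + 1 ≤ z + j then 1 else if z + j ≤ 0 then -1 else 0

/-- The vector of `j`-th unit steps from `x` towards `y`. -/
def stepVec {n : ℕ} (m j : ℤ) (x y : Fin n → ℤ) : Fin n → ℤ :=
  fun i => unitStep m j (y i - x i)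

theorem DMCSet.avg_mem {n : ℕ} {S : Set (Fin n → ℤ)} (hS : DMCSet S) {m : ℤ} (hm : 2 ≤ m)
    {x y : Fin n → ℤ} (hx : x ∈ S) (hy : y ∈ S) (h : IsDist m x y) :
    avgUp x y ∈ S ∧ avgDown x y ∈ S := by
  lift m to ℕ using by omega
  exact hS hx hy (by rw [h.linf_eq]; omega)

/-- If first steps between points of `S` at distance `q + 1` stay in `S`, so do first steps at
distance `2 * q + 1`, provided the difference attains the value `2 * q + 1`. -/
theorem DMCSet.firstStep_mem_of_odd {n : ℕ} {S : Set (Fin n → ℤ)} (hS : DMCSet S) {q : ℤ}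
    (hq : 1 ≤ q)
    (ih : ∀ x ∈ S, ∀ y ∈ S, IsDist (q + 1) x y → x + stepVec (q + 1) 1 x y ∈ S)
    {x y : Fin n → ℤ} (hx : x ∈ S) (hy : y ∈ S) (h : IsDist (2 * q + 1) x y)
    (hpos : ∃ i, y i - x i = 2 * q + 1) : x + stepVec (2 * q + 1) 1 x y ∈ S := by
  obtain ⟨hle, -⟩ := h
  obtain ⟨i₀, hi₀⟩ := hpos
  have hu : avgUp x y ∈ S := (hS.avg_mem (by omega) hx hy ⟨hle, i₀, .inl hi₀⟩).1
  have hw : x + stepVec (q + 1) 1 x (avgUp x y) ∈ S := by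
    refine ih _ hx _ hu ⟨fun i => ?_, i₀, .inl ?_⟩
    · have := hle i
      simp only [avgUp_apply]
      omega
    · simp only [avgUp_apply]
      omega
  set w := x + stepVec (q + 1) 1 x (avgUp x y) with hw_def
  have hwi : ∀ i, w i = x i + unitStep (q + 1) 1 ((x i + y i + 1) / 2 - x i) := fun i => by
    simp [hw_def, stepVec, avgUp_apply]
  have hv : avgDown w y ∈ S := by
    refine (hS.avg_mem (m := 2 * q) (by omega) hw hy ⟨fun i => ?_, i₀, .inl ?_⟩).2
    · have := hle i
      rw [hwi]
      unfold unitStep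
      split_ifs <;> omega
    · rw [hwi]
      unfold unitStep
      split_ifs <;> omega
  have hmem : x + stepVec (q + 1) 1 x (avgDown w y) ∈ S := by
    refine ih _ hx _ hv ⟨fun i => ?_, i₀, .inl ?_⟩
    · have := hle i
      rw [avgDown_apply, hwi]
      unfold unitStep
      split_ifs <;> omega
    · rw [avgDown_apply, hwi]
      unfold unitStep
      split_ifs <;> omega
  convert hmem using 2
  funext i
  have := hle i
  simp only [stepVec, avgDown_apply, hwi]
  unfold unitStep
  split_ifs <;> omega

theorem DMCSet.firstStep_mem {n : ℕ} {S : Set (Fin n → ℤ)} (hS : DMCSet S) (m : ℕ) (hm : 1 ≤ m) :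
    ∀ x ∈ S, ∀ y ∈ S, IsDist m x y → x + stepVec m 1 x y ∈ S := by
  induction m using Nat.strong_induction_on with
  | _ m ih =>
  intro x hx y hy h
  obtain rfl | hm1 := hm.eq_or_lt
  · convert hy using 1
    funext i
    have := h.1 i
    simp only [Pi.add_apply, stepVec, unitStep]
    push_cast at *
    split_ifs <;> omega
  obtain ⟨q, rfl | rfl⟩ := m.even_or_odd'
  · have hq : 1 ≤ q := by omega
    have hv : avgDown x y ∈ S := (hS.avg_mem (by omega) hx hy h).2
    convert ih q (by omega) hq x hx _ hv ⟨fun i => ?_, ?_⟩ using 2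
    · funext i
      have := h.1 i
      simp only [stepVec, avgDown_apply, unitStep]
      push_cast at *
      split_ifs <;> omega
    · have := h.1 i
      rw [avgDown_apply]
      push_cast at *
      omega
    · obtain ⟨i, hi⟩ := h.2
      refine ⟨i, ?_⟩
      rw [avgDown_apply]
      push_cast at *
      omega
  · have hq : (1 : ℤ) ≤ q := by omega
    push_cast at h ⊢
    have ihq : ∀ x ∈ S, ∀ y ∈ S, IsDist ((q : ℤ) + 1) x y → x + stepVec (q + 1) 1 x y ∈ S := by
      intro x hx y hy h
      exact_mod_cast ih (q + 1) (by omega) (by omega) x hx y hy (by exact_mod_cast h)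
    obtain ⟨i, hi | hi⟩ := h.2
    · exact hS.firstStep_mem_of_odd hq ihq hx hy h ⟨i, hi⟩
    · have hz := hS.firstStep_mem_of_odd hq ihq hy hx h.symm ⟨i, by omega⟩
      convert ih (2 * q) (by omega) (by omega) x hx _ hz ⟨fun i => ?_, i, ?_⟩ using 2
      · funext i
        have := h.1 i
        simp only [stepVec, Pi.add_apply, unitStep]
        push_cast
        split_ifs <;> omega
      · have := h.1 i
        simp only [stepVec, Pi.add_apply, unitStep]
        push_cast
        split_ifs <;> omega
      · simp only [stepVec, Pi.add_apply, unitStep]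
        push_cast
        split_ifs <;> omega

/-- Every unit step between two points of a discrete midpoint convex set stays in the set. After
the first step, the `j`-th step of the original difference is the `(j - 1)`-st step of the
remaining one. -/
theorem DMCSet.step_mem {n : ℕ} {S : Set (Fin n → ℤ)} (hS : DMCSet S) (m : ℕ) :
    ∀ x ∈ S, ∀ y ∈ S, IsDist m x y → ∀ j : ℕ, 1 ≤ j → j ≤ m → x + stepVec m j x y ∈ S := by
  induction m with
  | zero => intros; omega
  | succ m ih =>
  intro x hx y hy h j hj hjm
  have hfirst := hS.firstStep_mem (m + 1) (by omega) x hx y hy h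
  obtain rfl | hj1 := hj.eq_or_lt
  · exact hfirst
  have hdist : IsDist m (x + stepVec ((m + 1 : ℕ) : ℤ) 1 x y) y := by
    refine ⟨fun i => ?_, ?_⟩
    · have := h.1 i
      simp only [stepVec, Pi.add_apply, unitStep]
      push_cast at *
      split_ifs <;> omega
    · obtain ⟨i, hi⟩ := h.2
      refine ⟨i, ?_⟩
      simp only [stepVec, Pi.add_apply, unitStep]
      push_cast at *
      split_ifs <;> omega
  have hpair := ih _ hfirst y hy hdist (j - 1) (by omega) (by omega)
  have hup := (hS.avg_mem (m := 2) le_rfl hx hpair ⟨fun i => ?_, ?_⟩).1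
  · convert hup using 1
    funext i
    have := h.1 i
    simp only [stepVec, Pi.add_apply, unitStep, avgUp_apply]
    push_cast [hj] at *
    split_ifs <;> omega
  · have := h.1 i
    simp only [stepVec, Pi.add_apply, unitStep]
    push_cast [hj] at *
    split_ifs <;> omega
  · obtain ⟨i, hi⟩ := h.2
    refine ⟨i, ?_⟩
    simp only [stepVec, Pi.add_apply, unitStep]
    push_cast [hj] at *
    split_ifs <;> omega

theorem GloballyDMC.locallyDMC {n : ℕ} {f : (Fin n → ℤ) → WithTop ℝ} (hf : GloballyDMC f) :
    LocallyDMC f := by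
  refine ⟨fun x hx y hy h => ?_, fun x y h => hf x y h.ge⟩
  have hlt : f (avgUp x y) + f (avgDown x y) < ⊤ :=
    (hf x y h).trans_lt (WithTop.add_lt_top.2 ⟨Ne.lt_top hx, Ne.lt_top hy⟩)
  exact (WithTop.add_lt_top.1 hlt).imp LT.lt.ne LT.lt.ne

/-- Parallelogram inequality for the second unit step. -/
theorem LocallyDMC.secondStep_le {n : ℕ} {f : (Fin n → ℤ) → WithTop ℝ} (hf : LocallyDMC f)
    (m : ℕ) (hm : 2 ≤ m) : ∀ x ∈ effDom f, ∀ y ∈ effDom f, IsDist m x y →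
      f (x + stepVec m 2 x y) + f (y - stepVec m 2 x y) ≤ f x + f y := by
  induction m, hm using Nat.le_induction with
  | base =>
    intro x _ y _ h
    have havg : f (avgUp x y) + f (avgDown x y) ≤ f x + f y := hf.2 x y h.linf_eq
    convert havg using 3 <;>
    · funext i
      have := h.1 i
      simp only [stepVec, Pi.add_apply, Pi.sub_apply, unitStep, avgUp_apply, avgDown_apply]
      push_cast at *
      split_ifs <;> omega
  | succ m hm ih =>
    intro x hx y hy h
    set a := x + stepVec ((m + 1 : ℕ) : ℤ) ((m + 1 : ℕ) : ℤ) x y with ha_def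
    have ha : a ∈ effDom f := hf.1.step_mem (m + 1) x hx y hy h (m + 1) (by omega) le_rfl
    have hdist : IsDist m a y := by
      refine ⟨fun i => ?_, ?_⟩
      · have := h.1 i
        simp only [ha_def, stepVec, Pi.add_apply, unitStep]
        push_cast at *
        split_ifs <;> omega
      · obtain ⟨i, hi⟩ := h.2
        refine ⟨i, ?_⟩
        simp only [ha_def, stepVec, Pi.add_apply, unitStep]
        push_cast at *
        split_ifs <;> omega
    have hstep : stepVec m 2 a y = stepVec ((m + 1 : ℕ) : ℤ) 2 x y := by
      funext i
      have := h.1 i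
      simp only [ha_def, stepVec, Pi.add_apply, unitStep]
      push_cast at *
      split_ifs <;> omega
    have hb : a + stepVec m 2 a y ∈ effDom f :=
      hf.1.step_mem m a ha y hy hdist 2 (by omega) hm
    have hlong := ih a ha y hy hdist
    rw [hstep] at hb hlong
    set b := a + stepVec ((m + 1 : ℕ) : ℤ) 2 x y with hb_def
    have hxb : IsDist (2 : ℕ) x b := by
      refine ⟨fun i => ?_, ?_⟩
      · have := h.1 i
        simp only [hb_def, ha_def, stepVec, Pi.add_apply, unitStep]
        push_cast at *
        split_ifs <;> omega
      · obtain ⟨i, hi⟩ := h.2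
        refine ⟨i, ?_⟩
        simp only [hb_def, ha_def, stepVec, Pi.add_apply, unitStep]
        push_cast at *
        split_ifs <;> omega
    have hshort : f a + f (x + stepVec ((m + 1 : ℕ) : ℤ) 2 x y) ≤ f x + f b := by
      have havg : f (avgUp x b) + f (avgDown x b) ≤ f x + f b := hf.2 x b hxb.linf_eq
      convert havg using 3 <;>
      · funext i
        have := h.1 i
        simp only [hb_def, ha_def, stepVec, Pi.add_apply, unitStep, avgUp_apply, avgDown_apply]
        push_cast at *
        split_ifs <;> omega
    have hab : f a + f b ≠ ⊤ := WithTop.add_ne_top.2 ⟨ha, hb⟩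
    refine WithTop.le_of_add_le_add_left hab ?_
    calc _ = (f a + f (x + stepVec ((m + 1 : ℕ) : ℤ) 2 x y)) +
          (f b + f (y - stepVec ((m + 1 : ℕ) : ℤ) 2 x y)) := by ac_rfl
      _ ≤ (f x + f b) + (f a + f y) := add_le_add hshort hlong
      _ = _ := by ac_rfl

theorem finite_linf_ball {n : ℕ} (x0 : Fin n → ℤ) (k : ℕ) : {x | linf (x - x0) ≤ k}.Finite := by
  refine (Set.finite_Icc (fun i => x0 i - k) (fun i => x0 i + k)).subset fun x hx => ?_
  have := linf_le_iff.1 hx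
  simp only [Pi.sub_apply] at this
  exact ⟨fun i => by have := this i; dsimp only; omega, fun i => by have := this i; dsimp only; omega⟩

/-- A minimizer over the ball of radius `k + 1` can be moved to within distance two of a given
minimizer over the ball of radius `k`. -/
theorem LocallyDMC.exists_near_minimizer {n : ℕ} {f : (Fin n → ℤ) → WithTop ℝ}
    (hf : LocallyDMC f) {x0 x' : Fin n → ℤ} {k : ℕ} (hx' : linf (x' - x0) ≤ k)
    (hdom : x' ∈ effDom f) (hmin : ∀ z, linf (z - x0) ≤ k → f x' ≤ f z) (y : Fin n → ℤ)
    (hy : linf (y - x0) ≤ k + 1) (hymin : ∀ z, linf (z - x0) ≤ k + 1 → f y ≤ f z) :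
    ∃ x'', linf (x'' - x0) ≤ k + 1 ∧ (∀ z, linf (z - x0) ≤ k + 1 → f x'' ≤ f z) ∧
      linf (x'' - x') ≤ 2 := by
  induction hm : linf (x' - y) using Nat.strong_induction_on generalizing y with
  | _ m ih =>
  obtain hm2 | hm2 := le_or_gt m 2
  · exact ⟨y, hy, hymin, by rw [linf_sub_comm]; omega⟩
  have hdist : IsDist m x' y := hm ▸ isDist_linf (by omega)
  have hydom : y ∈ effDom f := ne_top_of_le_ne_top hdom (hymin x' (by omega))
  have hpar := hf.secondStep_le m (by omega) x' hdom y hydom hdist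
  have hx'i := linf_le_iff.1 hx'
  have hyi := linf_le_iff.1 hy
  simp only [Pi.sub_apply] at hx'i hyi
  have hin : f x' ≤ f (x' + stepVec m 2 x' y) := by
    refine hmin _ (linf_le_iff.2 fun i => ?_)
    have h₁ := hx'i i
    have h₂ := hyi i
    simp only [stepVec, Pi.add_apply, Pi.sub_apply, unitStep]
    push_cast at *
    split_ifs <;> omega
  have hle : f (y - stepVec m 2 x' y) ≤ f y :=
    WithTop.le_of_add_le_add_left hdom ((add_le_add_left hin _).trans hpar)
  refine ih (linf (x' - (y - stepVec m 2 x' y))) ?_ (y - stepVec m 2 x' y) ?_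
    (fun z hz => hle.trans (hymin z hz)) rfl
  · suffices linf (x' - (y - stepVec m 2 x' y)) ≤ m - 1 by omega
    refine linf_le_iff.2 fun i => ?_
    have := hdist.1 i
    simp only [stepVec, Pi.sub_apply, unitStep]
    push_cast [show 1 ≤ m by omega] at *
    split_ifs <;> omega
  · refine linf_le_iff.2 fun i => ?_
    have h₁ := hx'i i
    have h₂ := hyi i
    simp only [stepVec, Pi.sub_apply, unitStep]
    push_cast at *
    split_ifs <;> omega

/-- 2-neighborhood steepest descent step: for a (globally or locally) discrete
midpoint convex function with a nonempty set of minimizers, with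
`L = min{‖x − x⁰‖∞ : x ∈ argmin f}` and `S_k` the ℓ∞-ball of radius `k`
around `x⁰`, every minimizer of `f` over `S_{k−1}` (for `3 ≤ k ≤ L`) is at
ℓ∞-distance at most 2 from some minimizer of `f` over `S_k`. -/
theorem two_neighborhood_descent_step {n : ℕ} (f : (Fin n → ℤ) → WithTop ℝ)
    (hdmc : GloballyDMC f ∨ LocallyDMC f)
    (argmin : Set (Fin n → ℤ)) (hargmin : argmin = {x | ∀ z, f x ≤ f z})
    (hne : argmin.Nonempty)
    (x0 : Fin n → ℤ) (hx0dom : x0 ∈ effDom f) (hx0 : x0 ∉ argmin)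
    (L : ℕ) (hL : L = sInf ((fun x => linf (x - x0)) '' argmin))
    (S : ℕ → Set (Fin n → ℤ))
    (hS : ∀ k, S k = {x : Fin n → ℤ | linf (x - x0) ≤ k})
    (k : ℕ) (hk3 : 3 ≤ k) (hkL : k ≤ L)
    (x' : Fin n → ℤ) (hx' : x' ∈ S (k - 1) ∧ ∀ z ∈ S (k - 1), f x' ≤ f z) :
    ∃ x'' : Fin n → ℤ, x'' ∈ S k ∧ (∀ z ∈ S k, f x'' ≤ f z) ∧
      linf (x'' - x') ≤ 2 := by
  have hf : LocallyDMC f := hdmc.elim GloballyDMC.locallyDMC id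
  obtain ⟨k, rfl⟩ : ∃ l, k = l + 1 := ⟨k - 1, by omega⟩
  simp only [hS, Nat.add_sub_cancel, Set.mem_ofPred_eq] at hx' ⊢
  have hx0ball : ∀ l, linf (x0 - x0) ≤ l := fun l => linf_le_iff.2 fun i => by simp
  obtain ⟨y, hy, hymin⟩ := Set.exists_min_image _ f (finite_linf_ball x0 (k + 1))
    ⟨x0, hx0ball (k + 1)⟩
  exact hf.exists_near_minimizer hx'.1 (ne_top_of_le_ne_top hx0dom (hx'.2 x0 (hx0ball k)))
    hx'.2 y hy hymin
end

section
/- Let Q be an n×n real symmetric matrix whose minimum and maximum eigenvalues λ_min and λ_max satisfy λ_min ≥ ((n−1)/(n+3))·λ_max. Then f : ℤⁿ → ℝ defined by f(x) = xᵀQx is globally discrete midpoint convex. -/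
open Matrix Classical

/-- The real cast of an integer vector. -/
def castVec {n : ℕ} (z : Fin n → ℤ) : Fin n → ℝ := fun i => (z i : ℝ)

/-- The quadratic function `f(x) = xᵀ Q x` on `ℤⁿ`. -/
def quadFn {n : ℕ} (Q : Matrix (Fin n) (Fin n) ℝ) (x : Fin n → ℤ) : ℝ :=
  castVec x ⬝ᵥ Q.mulVec (castVec x)

/-- The real-valued function `f` satisfies discrete midpoint convexity for the
pair `(x, y)`. -/
def DMCPairR {n : ℕ} (f : (Fin n → ℤ) → ℝ) (x y : Fin n → ℤ) : Prop :=
  f (avgUp x y) + f (avgDown x y) ≤ f x + f y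

/-- A real-valued `f` is globally discrete midpoint convex (its effective
domain is all of `ℤⁿ`, which is trivially a discrete midpoint convex set). -/
def GloballyDMCR {n : ℕ} (f : (Fin n → ℤ) → ℝ) : Prop :=
  ∀ x y : Fin n → ℤ, 2 ≤ linf (x - y) → DMCPairR f x y

/-- A real-valued `f` is locally discrete midpoint convex (its effective
domain is all of `ℤⁿ`, which is trivially a discrete midpoint convex set). -/
def LocallyDMCR {n : ℕ} (f : (Fin n → ℤ) → ℝ) : Prop :=
  ∀ x y : Fin n → ℤ, linf (x - y) = 2 → DMCPairR f x y

/-- The characteristic real vector of the set of indices where `z` is odd. -/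
noncomputable def oddChar {n : ℕ} (z : Fin n → ℤ) : Fin n → ℝ :=
  fun i => if Odd (z i) then 1 else 0

open scoped MatrixOrder Matrix.Norms.L2Operator in
/-- The smallest eigenvalue bounds the quadratic form from below. -/
lemma iInf_eigenvalues_mul_dotProduct_le {n : ℕ} {Q : Matrix (Fin n) (Fin n) ℝ}
    (hQ : Q.IsHermitian) (v : Fin n → ℝ) :
    (⨅ i, hQ.eigenvalues i) * (v ⬝ᵥ v) ≤ v ⬝ᵥ Q *ᵥ v := by
  have h : algebraMap ℝ _ (⨅ i, hQ.eigenvalues i) ≤ Q := by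
    refine algebraMap_le_of_le_spectrum ?_ hQ.isSelfAdjoint
    rw [hQ.spectrum_real_eq_range_eigenvalues]
    rintro _ ⟨i, rfl⟩
    exact ciInf_le (Set.finite_range _).bddBelow i
  have := (Matrix.le_iff.mp h).dotProduct_mulVec_nonneg v
  simpa [Algebra.algebraMap_eq_smul_one, sub_mulVec, smul_mulVec, dotProduct_sub] using this

open scoped MatrixOrder Matrix.Norms.L2Operator in
/-- The largest eigenvalue bounds the quadratic form from above. -/
lemma dotProduct_le_iSup_eigenvalues_mul {n : ℕ} {Q : Matrix (Fin n) (Fin n) ℝ}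
    (hQ : Q.IsHermitian) (v : Fin n → ℝ) :
    v ⬝ᵥ Q *ᵥ v ≤ (⨆ i, hQ.eigenvalues i) * (v ⬝ᵥ v) := by
  have h : Q ≤ algebraMap ℝ _ (⨆ i, hQ.eigenvalues i) := by
    refine le_algebraMap_of_spectrum_le ?_ hQ.isSelfAdjoint
    rw [hQ.spectrum_real_eq_range_eigenvalues]
    rintro _ ⟨i, rfl⟩
    exact le_ciSup (Set.finite_range _).bddAbove i
  have := (Matrix.le_iff.mp h).dotProduct_mulVec_nonneg v
  simpa [Algebra.algebraMap_eq_smul_one, sub_mulVec, smul_mulVec, dotProduct_sub] using this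

lemma two_mul_avgUp {n : ℕ} (x y : Fin n → ℤ) (i : Fin n) :
    2 * avgUp x y i = x i + y i + (x i - y i) % 2 := by
  have h : avgUp x y i = (x i + y i + (x i - y i) % 2) / 2 := by
    rw [avgUp, Int.ceil_eq_iff]
    have h2 : 2 * ((x i + y i + (x i - y i) % 2) / 2) = x i + y i + (x i - y i) % 2 := by omega
    have h3 : (x i - y i) % 2 < 2 := by omega
    have h4 : 0 ≤ (x i - y i) % 2 := by omega
    qify at h2 h3 h4
    constructor <;> linarith
  omega

lemma two_mul_avgDown {n : ℕ} (x y : Fin n → ℤ) (i : Fin n) :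
    2 * avgDown x y i = x i + y i - (x i - y i) % 2 := by
  have h : avgDown x y i = (x i + y i - (x i - y i) % 2) / 2 := by
    rw [avgDown, Int.floor_eq_iff]
    have h2 : 2 * ((x i + y i - (x i - y i) % 2) / 2) = x i + y i - (x i - y i) % 2 := by omega
    have h3 : (x i - y i) % 2 < 2 := by omega
    have h4 : 0 ≤ (x i - y i) % 2 := by omega
    qify at h2 h3 h4
    constructor <;> linarith
  omega

/-- The parallelogram law for quadratic forms, with the factor of two cleared. -/
lemma two_mul_dotProduct_mulVec_add {ι : Type*} [Fintype ι] (Q : Matrix ι ι ℝ) {a b s d : ι → ℝ}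
    (hs : a + b = s) (hd : a - b = d) :
    2 * (a ⬝ᵥ Q *ᵥ a + b ⬝ᵥ Q *ᵥ b) = s ⬝ᵥ Q *ᵥ s + d ⬝ᵥ Q *ᵥ d := by
  subst hs hd
  simp only [mulVec_add, mulVec_sub, add_dotProduct, sub_dotProduct, dotProduct_add,
    dotProduct_sub]
  ring

/-- For a quadratic form, discrete midpoint convexity for `(x, y)` compares the values at `x - y`
and at its parity vector. -/
lemma dmcPairR_quadFn_of_le {n : ℕ} {Q : Matrix (Fin n) (Fin n) ℝ} {x y : Fin n → ℤ}
    (h : quadFn Q (fun i => (x - y) i % 2) ≤ quadFn Q (x - y)) : DMCPairR (quadFn Q) x y := by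
  have h₁ := two_mul_dotProduct_mulVec_add Q (a := castVec x) (b := castVec y)
    (s := castVec (x + y)) (d := castVec (x - y))
    (by ext; simp [castVec]) (by ext; simp [castVec])
  have h₂ := two_mul_dotProduct_mulVec_add Q (a := castVec (avgUp x y))
    (b := castVec (avgDown x y)) (s := castVec (x + y)) (d := castVec fun i => (x - y) i % 2)
    (by
      ext i
      have := two_mul_avgUp x y i
      have := two_mul_avgDown x y i
      simp only [castVec, Pi.add_apply]
      exact_mod_cast (by omega : avgUp x y i + avgDown x y i = x i + y i))
    (by
      ext i
      have := two_mul_avgUp x y i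
      have := two_mul_avgDown x y i
      simp only [castVec, Pi.sub_apply]
      exact_mod_cast (by omega : avgUp x y i - avgDown x y i = (x i - y i) % 2))
  unfold DMCPairR
  unfold quadFn at *
  linarith

lemma emod_two_le_sq (a : ℤ) : a % 2 ≤ a ^ 2 := by
  rcases eq_or_ne a 0 with rfl | h
  · simp
  · have : 0 < a ^ 2 := by positivity
    omega

/-- If some entry of `z` has absolute value at least two, then replacing `z` by its parity vector
decreases the squared norm by at least four, and by at least eight if every entry is odd. -/
lemma sum_sq_gap {n : ℕ} {z : Fin n → ℤ} (hz : 2 ≤ linf z) :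
    (∑ i, z i % 2 + 4 ≤ ∑ i, z i ^ 2 ∧ ∑ i, z i % 2 ≤ n - 1) ∨
      (∑ i, z i % 2 + 8 ≤ ∑ i, z i ^ 2 ∧ ∑ i, z i % 2 ≤ n) := by
  obtain ⟨j, -, hj⟩ := (Finset.le_sup_iff (by simp : (⊥ : ℕ) < 2)).mp hz
  have hsq := Finset.sum_le_sum fun i (_ : i ∈ Finset.univ.erase j) => emod_two_le_sq (z i)
  have hcard : ∑ i ∈ Finset.univ.erase j, z i % 2 ≤ (n : ℤ) - 1 := by
    have := Finset.sum_le_card_nsmul (Finset.univ.erase j) (fun i => z i % 2) 1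
      (fun i _ => by omega)
    have hn : 0 < n := j.pos
    simpa [Finset.card_erase_of_mem, Nat.cast_sub hn] using this
  rw [← Finset.add_sum_erase _ _ (Finset.mem_univ j),
    ← Finset.add_sum_erase _ (fun i => z i ^ 2) (Finset.mem_univ j)]
  have habs : ((z j).natAbs : ℤ) ^ 2 = z j ^ 2 := Int.natAbs_sq _
  rcases Int.emod_two_eq_zero_or_one (z j) with h | h
  · left
    have : (2 : ℤ) ≤ (z j).natAbs := by omega
    constructor
    · nlinarith
    · linarith
  · right
    have : (3 : ℤ) ≤ (z j).natAbs := by omega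
    constructor
    · nlinarith
    · linarith

/-- If the minimum eigenvalue of the real symmetric matrix `Q` is at least
`((n−1)/(n+3))` times its maximum eigenvalue, then `f(x) = xᵀQx` is globally
discrete midpoint convex. -/
theorem quad_globallyDMC_of_eigenvalue_ratio {n : ℕ} (hn : 0 < n)
    (Q : Matrix (Fin n) (Fin n) ℝ) (hQ : Q.IsHermitian)
    (heig : ((n : ℝ) - 1) / ((n : ℝ) + 3) * (⨆ i, hQ.eigenvalues i) ≤
      ⨅ i, hQ.eigenvalues i) :
    GloballyDMCR (quadFn Q) := by
  intro x y hxy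
  apply dmcPairR_quadFn_of_le
  set z := x - y
  refine (dotProduct_le_iSup_eigenvalues_mul hQ _).trans
    (le_trans ?_ (iInf_eigenvalues_mul_dotProduct_le hQ _))
  have hz : castVec z ⬝ᵥ castVec z = ((∑ i, z i ^ 2 : ℤ) : ℝ) := by
    simp [dotProduct, castVec, sq]
  have ho : (castVec fun i => z i % 2) ⬝ᵥ (castVec fun i => z i % 2) =
      ((∑ i, z i % 2 : ℤ) : ℝ) := by
    simp only [dotProduct, castVec]
    norm_cast
    refine Finset.sum_congr rfl fun i _ => ?_
    rcases Int.emod_two_eq_zero_or_one (z i) with h | h <;> simp [h]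
  rw [hz, ho]
  have hgap := sum_sq_gap hxy
  have hk : 0 ≤ ∑ i, z i % 2 := Finset.sum_nonneg fun i _ => by omega
  have hminmax : (⨅ i, hQ.eigenvalues i) ≤ ⨆ i, hQ.eigenvalues i :=
    (ciInf_le (Set.finite_range _).bddBelow (⟨0, hn⟩ : Fin n)).trans
      (le_ciSup (Set.finite_range _).bddAbove (⟨0, hn⟩ : Fin n))
  have hone : n = 1 → (⨆ i, hQ.eigenvalues i) = ⨅ i, hQ.eigenvalues i := by
    rintro rfl
    rw [ciSup_unique, ciInf_unique]
  generalize (⨆ i, hQ.eigenvalues i) = M at *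
  generalize (⨅ i, hQ.eigenvalues i) = m at *
  generalize ∑ i, z i % 2 = k at *
  generalize ∑ i, z i ^ 2 = N at *
  have hn' : (1 : ℝ) ≤ n := by exact_mod_cast hn
  rw [div_mul_eq_mul_div, div_le_iff₀ (by positivity)] at heig
  have hm : 0 ≤ m := by nlinarith
  obtain rfl | hn2 : n = 1 ∨ 2 ≤ n := by omega
  · rw [hone rfl, mul_comm, mul_comm m]
    have : k ≤ N := by omega
    gcongr
  · have hkN : k * (n + 3) ≤ N * ((n : ℤ) - 1) := by
      have hn2' : (2 : ℤ) ≤ n := by exact_mod_cast hn2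
      rcases hgap with ⟨h₁, h₂⟩ | ⟨h₁, h₂⟩ <;> nlinarith
    have hkN' : (k : ℝ) * (n + 3) ≤ N * ((n : ℝ) - 1) := by exact_mod_cast hkN
    have hk' : (0 : ℝ) ≤ k := by exact_mod_cast hk
    have hn2' : (2 : ℝ) ≤ n := by exact_mod_cast hn2
    refine le_of_mul_le_mul_left ?_ (by linarith : (0 : ℝ) < n - 1)
    nlinarith [mul_le_mul_of_nonneg_left heig hk', mul_le_mul_of_nonneg_left hkN' hm]
end
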